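/- arXiv:1811.03769 — 2 statements merged into one kernel-verified Lean document; each statement's English description precedes it below -/
import Mathlib

section
/- Let d ∈ ℕ, C₁ ≥ 1 and β > 0. There exists ε > 0, depending only on d, C₁ and β, such that the following holds: if Σ ⊆ ℝ^{d+1} is a closed set which is Ahlfors d-regular with constant C₁, x ∈ Σ, 0 < r < (diam Σ)/100, and bβ_Σ(x,r) ≥ β, then α_{H^d|_Σ}(x,4r) ≥ ε. -/
open MeasureTheory Metric Filter
open scoped ENNReal NNReal

noncomputable section

/-- `bbeta d E x r` is the quantity `bβ_E(x,r)`: the infimum over all `d`-dimensional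
affine planes `V ⊆ ℝ^{d+1}` of
`sup_{y ∈ E ∩ B(x,r)} dist(y,V)/r + sup_{y ∈ V ∩ B(x,r)} dist(y,E)/r`,
where suprema over empty sets are `0` (which is `Real.sSup`'s junk value). -/
def bbeta (d : ℕ) (E : Set (EuclideanSpace ℝ (Fin (d+1))))
    (x : EuclideanSpace ℝ (Fin (d+1))) (r : ℝ) : ℝ :=
  sInf { t : ℝ | ∃ V : AffineSubspace ℝ (EuclideanSpace ℝ (Fin (d+1))),
    (V : Set (EuclideanSpace ℝ (Fin (d+1)))).Nonempty ∧
    Module.finrank ℝ V.direction = d ∧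
    t = sSup ((fun y => infDist y (V : Set (EuclideanSpace ℝ (Fin (d+1))))) ''
          (E ∩ closedBall x r)) / r
      + sSup ((fun y => infDist y E) ''
          ((V : Set (EuclideanSpace ℝ (Fin (d+1)))) ∩ closedBall x r)) / r }

/-- `FDist μ ν B = sup_f |∫ f dμ − ∫ f dν|`, the supremum over all nonnegative
1-Lipschitz functions `f` supported in `B`. -/
def FDist {n : ℕ} (μ ν : Measure (EuclideanSpace ℝ (Fin n)))
    (B : Set (EuclideanSpace ℝ (Fin n))) : ℝ :=
  sSup { t : ℝ | ∃ f : EuclideanSpace ℝ (Fin n) → ℝ,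
    LipschitzWith 1 f ∧ (∀ x, 0 ≤ f x) ∧ Function.support f ⊆ B ∧
    t = |(∫ x, f x ∂μ) - ∫ x, f x ∂ν| }

/-- `alphaV d μ x r V = r^{-d-1} · inf_{c>0} F_{B(x,r)}(μ, c·H^d|_V)`. -/
def alphaV (d : ℕ) {n : ℕ} (μ : Measure (EuclideanSpace ℝ (Fin n)))
    (x : EuclideanSpace ℝ (Fin n)) (r : ℝ)
    (V : AffineSubspace ℝ (EuclideanSpace ℝ (Fin n))) : ℝ :=
  r ^ (-(d : ℝ) - 1) *
    sInf { t : ℝ | ∃ c : ℝ, 0 < c ∧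
      t = FDist μ (ENNReal.ofReal c •
            (μH[(d : ℝ)]).restrict (V : Set (EuclideanSpace ℝ (Fin n))))
          (closedBall x r) }

/-- `alphaA d μ x r = inf_V alphaV d μ x r V` over all `d`-dimensional affine planes `V`. -/
def alphaA (d : ℕ) {n : ℕ} (μ : Measure (EuclideanSpace ℝ (Fin n)))
    (x : EuclideanSpace ℝ (Fin n)) (r : ℝ) : ℝ :=
  sInf { t : ℝ | ∃ V : AffineSubspace ℝ (EuclideanSpace ℝ (Fin n)),
    (V : Set (EuclideanSpace ℝ (Fin n))).Nonempty ∧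
    Module.finrank ℝ V.direction = d ∧ t = alphaV d μ x r V }

/-- `E` is Ahlfors `s`-regular with constant `C₁`:
`C₁⁻¹ r^s ≤ H^s(E ∩ B(x,r)) ≤ C₁ r^s` for all `x ∈ E` and `0 < r < diam E`. -/
def AhlforsRegular {n : ℕ} (s C₁ : ℝ) (E : Set (EuclideanSpace ℝ (Fin n))) : Prop :=
  ∀ x ∈ E, ∀ r : ℝ, 0 < r → ENNReal.ofReal r < EMetric.diam E →
    ENNReal.ofReal (C₁⁻¹ * r ^ s) ≤ μH[s] (E ∩ closedBall x r) ∧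
    μH[s] (E ∩ closedBall x r) ≤ ENNReal.ofReal (C₁ * r ^ s)

/-- The `t`-dimensional Hausdorff content `H^t_∞(A)`: the infimum of `∑ (diam U_i)^t`
over countable covers of `A` by arbitrary sets. -/
def hContent {n : ℕ} (t : ℝ) (A : Set (EuclideanSpace ℝ (Fin n))) : ℝ≥0∞ :=
  ⨅ (U : ℕ → Set (EuclideanSpace ℝ (Fin n))) (_ : A ⊆ ⋃ i, U i),
    ∑' i, EMetric.diam (U i) ^ t

/-- `F ⊆ ℝ^n` is `d`-rectifiable: `H^d(F) < ∞` and `F` can be covered, up to an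
`H^d`-null set, by countably many Lipschitz images of `ℝ^d`. -/
def DRectifiable (d : ℕ) {n : ℕ} (F : Set (EuclideanSpace ℝ (Fin n))) : Prop :=
  μH[(d : ℝ)] F < ⊤ ∧
  ∃ f : ℕ → (EuclideanSpace ℝ (Fin d) → EuclideanSpace ℝ (Fin n)),
    (∀ i, ∃ K : ℝ≥0, LipschitzWith K (f i)) ∧
    μH[(d : ℝ)] (F \ ⋃ i, Set.range (f i)) = 0

end

open MeasureTheory Metric Filter
open scoped ENNReal

/-!
If `c • H^d|_V` is close to `H^d|_S` on `B(x, 4r)`, test the two measures against the tent function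
of radius `ρ = δr` at a point `y` of one of the sets `S`, `V` in `B(x, r)`. If the other set missed
`B(y, ρ)`, only one of the two integrals would be nonzero, and it is at least a multiple of
`ρ ^ (d + 1)` since both measures charge balls centred on their supports. For the plane this needs a
lower bound on `c`, which comes from the tent function of radius `2r` at `x` and the lower
regularity of `S` there. So smallness of `α` forces `S` and `V` to be `δr`-close in `B(x, r)`.
-/

section Tent

variable {X : Type*} [PseudoMetricSpace X] {y : X} {ρ : ℝ}

/-- The tent function of radius `ρ` at `y`: a nonnegative 1-Lipschitz function supported in
`closedBall y ρ`, used as a test function in `FDist`. -/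
def tent (y : X) (ρ : ℝ) (z : X) : ℝ := max 0 (ρ - dist z y)

lemma tent_nonneg (z : X) : 0 ≤ tent y ρ z := le_max_left _ _

lemma tent_le (hρ : 0 ≤ ρ) (z : X) : tent y ρ z ≤ ρ :=
  max_le hρ (sub_le_self _ dist_nonneg)

lemma half_le_tent_iff (hρ : 0 < ρ) {z : X} : ρ / 2 ≤ tent y ρ z ↔ z ∈ closedBall y (ρ / 2) := by
  rw [tent, le_max_iff, or_iff_right (half_pos hρ).not_ge, mem_closedBall, le_sub_comm, sub_half]

lemma support_tent_subset : Function.support (tent y ρ) ⊆ closedBall y ρ := fun z hz ↦ by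
  by_contra h
  exact hz (max_eq_left (sub_nonpos.2 (not_le.1 h).le))

lemma lipschitzWith_tent : LipschitzWith 1 (tent y ρ) := by
  simpa only [zero_add] using!
    ((LipschitzWith.const ρ).sub (LipschitzWith.dist_left y)).const_max 0

end Tent

lemma integral_le_mul_measureReal {X : Type*} [MeasurableSpace X] {μ : Measure X} {s : Set X}
    {f : X → ℝ} {M : ℝ} (hs : μ s ≠ ⊤) (hf₀ : ∀ z, 0 ≤ f z) (hfM : ∀ z, f z ≤ M)
    (hf : Function.support f ⊆ s) : ∫ z, f z ∂μ ≤ M * μ.real s := by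
  rw [← setIntegral_eq_integral_of_forall_compl_eq_zero
    fun z hz ↦ Function.notMem_support.1 (mt (@hf z) hz)]
  refine (Real.le_norm_self _).trans (norm_setIntegral_le_of_norm_le_const hs.lt_top fun z _ ↦ ?_)
  rw [Real.norm_of_nonneg (hf₀ z)]
  exact hfM z

lemma half_mul_measureReal_le_integral_tent {X : Type*} [PseudoMetricSpace X] [MeasurableSpace X]
    [OpensMeasurableSpace X] {μ : Measure X} {y : X} {ρ : ℝ} (hρ : 0 < ρ)
    (hμ : μ (closedBall y ρ) ≠ ⊤) :
    ρ / 2 * μ.real (closedBall y (ρ / 2)) ≤ ∫ z, tent y ρ z ∂μ := by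
  have hint : Integrable (tent y ρ) μ := by
    rw [← integrableOn_iff_integrable_of_support_subset support_tent_subset]
    refine Measure.integrableOn_of_bounded (M := ρ) hμ
      lipschitzWith_tent.continuous.measurable.aestronglyMeasurable (.of_forall fun z ↦ ?_)
    rw [Real.norm_of_nonneg (tent_nonneg z)]
    exact tent_le hρ.le z
  have hset : {z | ρ / 2 ≤ tent y ρ z} = closedBall y (ρ / 2) :=
    Set.ext fun _ ↦ half_le_tent_iff hρ
  rw [← hset]
  exact mul_meas_ge_le_integral_of_nonneg (.of_forall tent_nonneg) hint _

lemma le_three_mul_of_lipschitzWith_of_support_subset {E : Type*} [NormedAddCommGroup E]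
    [NormedSpace ℝ E] [Nontrivial E] {x : E} {R : ℝ} {f : E → ℝ} (hR : 0 < R)
    (hf : LipschitzWith 1 f) (hs : Function.support f ⊆ closedBall x R) (z : E) :
    f z ≤ 3 * R := by
  by_cases hz : z ∈ closedBall x R
  · -- compare with the value `0` at a point at distance `2 * R` from `x`
    obtain ⟨p, hp⟩ := exists_norm_eq E (c := 2 * R) (by positivity)
    have hfp : f (x + p) = 0 := Function.notMem_support.1 fun h ↦ by
      have : ‖p‖ ≤ R := by simpa using hs h
      linarith
    calc f z ≤ f (x + p) + dist z (x + p) := by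
          simpa using hf.le_add_mul z (x + p)
      _ ≤ 0 + (dist z x + dist x (x + p)) := by
          rw [hfp]
          gcongr
          exact dist_triangle _ _ _
      _ ≤ 3 * R := by
          rw [dist_self_add_right, hp]
          linarith [mem_closedBall.1 hz]
  · rw [Function.notMem_support.1 (mt (@hs z) hz)]
    positivity

section FDist

variable {n : ℕ} {μ ν : Measure (EuclideanSpace ℝ (Fin n))} {x y : EuclideanSpace ℝ (Fin n)}
  {ρ R : ℝ}

lemma FDist_comm (B : Set (EuclideanSpace ℝ (Fin n))) : FDist μ ν B = FDist ν μ B := by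
  simp only [FDist, abs_sub_comm]

variable [NeZero n]

lemma abs_integral_sub_integral_le_FDist (hR : 0 < R) (hμ : μ (closedBall x R) ≠ ⊤)
    (hν : ν (closedBall x R) ≠ ⊤) {f : EuclideanSpace ℝ (Fin n) → ℝ} (hf : LipschitzWith 1 f)
    (hf₀ : ∀ z, 0 ≤ f z) (hs : Function.support f ⊆ closedBall x R) :
    |∫ z, f z ∂μ - ∫ z, f z ∂ν| ≤ FDist μ ν (closedBall x R) := by
  refine le_csSup ⟨max (3 * R * μ.real (closedBall x R)) (3 * R * ν.real (closedBall x R)), ?_⟩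
    ⟨f, hf, hf₀, hs, rfl⟩
  rintro _ ⟨g, hg, hg₀, hgs, rfl⟩
  have hgR := le_three_mul_of_lipschitzWith_of_support_subset hR hg hgs
  exact abs_sub_le_of_nonneg_of_le
    (integral_nonneg hg₀) (le_max_of_le_left (integral_le_mul_measureReal hμ hg₀ hgR hgs))
    (integral_nonneg hg₀) (le_max_of_le_right (integral_le_mul_measureReal hν hg₀ hgR hgs))

lemma half_mul_measureReal_closedBall_le_add_FDist (hR : 0 < R) (hρ : 0 < ρ)
    (hμ : μ (closedBall x R) ≠ ⊤) (hν : ν (closedBall x R) ≠ ⊤)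
    (hsub : closedBall y ρ ⊆ closedBall x R) :
    ρ / 2 * μ.real (closedBall y (ρ / 2)) ≤
      ρ * ν.real (closedBall y ρ) + FDist μ ν (closedBall x R) :=
  calc ρ / 2 * μ.real (closedBall y (ρ / 2)) ≤ ∫ z, tent y ρ z ∂μ :=
        half_mul_measureReal_le_integral_tent hρ (measure_ne_top_of_subset hsub hμ)
    _ ≤ ∫ z, tent y ρ z ∂ν + |∫ z, tent y ρ z ∂μ - ∫ z, tent y ρ z ∂ν| :=
        sub_le_iff_le_add'.1 (le_abs_self _)
    _ ≤ ρ * ν.real (closedBall y ρ) + FDist μ ν (closedBall x R) := by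
        gcongr
        · exact integral_le_mul_measureReal (measure_ne_top_of_subset hsub hν) tent_nonneg
            (tent_le hρ.le) support_tent_subset
        · exact abs_integral_sub_integral_le_FDist hR hμ hν lipschitzWith_tent tent_nonneg
            (support_tent_subset.trans hsub)

lemma infDist_le_of_FDist_restrict_lt {A : Set (EuclideanSpace ℝ (Fin n))} (hR : 0 < R)
    (hρ : 0 < ρ) (hμ : μ (closedBall x R) ≠ ⊤) (hν : ν.restrict A (closedBall x R) ≠ ⊤)
    (hsub : closedBall y ρ ⊆ closedBall x R)
    (hF : FDist μ (ν.restrict A) (closedBall x R) < ρ / 2 * μ.real (closedBall y (ρ / 2))) :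
    infDist y A ≤ ρ := by
  by_contra! hA
  have hzero : (ν.restrict A).real (closedBall y ρ) = 0 := by
    rw [measureReal_restrict_apply measurableSet_closedBall,
      (disjoint_closedBall_of_lt_infDist hA).inter_eq, measureReal_empty]
  have := half_mul_measureReal_closedBall_le_add_FDist hR hρ hμ hν hsub
  rw [hzero, mul_zero, zero_add] at this
  exact this.not_gt hF

end FDist

section HausdorffMeasurePlane

lemma hausdorffMeasure_ball_lt_top {E : Type*} [NormedAddCommGroup E] [NormedSpace ℝ E]
    [FiniteDimensional ℝ E] [MeasurableSpace E] [BorelSpace E] {d : ℕ}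
    (hE : Module.finrank ℝ E = d) {x : E} {r : ℝ} : μH[(d : ℝ)] (ball x r) < ⊤ := by
  subst hE
  exact measure_ball_lt_top

variable {E : Type*} [NormedAddCommGroup E] [NormedSpace ℝ E] [MeasurableSpace E] [BorelSpace E]
  {V : AffineSubspace ℝ E} [FiniteDimensional ℝ V.direction] {d : ℕ} {y : E} {ρ : ℝ}

lemma hausdorffMeasure_affineSubspace_inter_closedBall
    (hV : Module.finrank ℝ V.direction = d) (hy : y ∈ V) (hρ : 0 ≤ ρ) :
    μH[(d : ℝ)] ((V : Set E) ∩ closedBall y ρ) =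
      ENNReal.ofReal (ρ ^ d) * μH[(d : ℝ)] (ball (0 : V.direction) 1) := by
  subst hV
  have : Nonempty V := ⟨y, hy⟩
  calc μH[(Module.finrank ℝ V.direction : ℝ)] ((V : Set E) ∩ closedBall y ρ)
      = μH[(Module.finrank ℝ V.direction : ℝ)] (closedBall (⟨y, hy⟩ : V) ρ) := by
        have hval : Isometry ((↑) : V → E) := isometry_subtype_coe
        rw [← hval.hausdorffMeasure_image (.inl (by positivity))]
        exact congrArg _ (Subtype.image_preimage_coe _ _).symm
    _ = μH[(Module.finrank ℝ V.direction : ℝ)] (closedBall (0 : V.direction) ρ) := by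
        rw [← (IsometryEquiv.vaddConst (⟨y, hy⟩ : V)).hausdorffMeasure_image,
          IsometryEquiv.image_closedBall]
        simp only [IsometryEquiv.vaddConst_apply, zero_vadd]
    _ = _ := Measure.addHaar_closedBall _ _ hρ

end HausdorffMeasurePlane

section FlatMeasure

variable {n d : ℕ} {c ρ : ℝ} {V : AffineSubspace ℝ (EuclideanSpace ℝ (Fin n))}
  {y : EuclideanSpace ℝ (Fin n)}

/-- The flat measure `c · H^d|_V`, in the form in which it enters `alphaV`. -/
noncomputable def flatMeasure (d : ℕ) (c : ℝ) (V : AffineSubspace ℝ (EuclideanSpace ℝ (Fin n))) :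
    Measure (EuclideanSpace ℝ (Fin n)) :=
  ENNReal.ofReal c • (μH[(d : ℝ)]).restrict (V : Set (EuclideanSpace ℝ (Fin n)))

/-- The density of `flatMeasure d c V`: its value on unit balls centred on the `d`-plane `V`. -/
noncomputable def flatDensity (d : ℕ) (c : ℝ) (V : AffineSubspace ℝ (EuclideanSpace ℝ (Fin n))) :
    ℝ :=
  c * (μH[(d : ℝ)]).real (ball (0 : V.direction) 1)

lemma flatMeasure_eq_restrict :
    flatMeasure d c V =
      (ENNReal.ofReal c • μH[(d : ℝ)]).restrict (V : Set (EuclideanSpace ℝ (Fin n))) :=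
  (Measure.restrict_smul _ _ _).symm

lemma flatMeasure_closedBall :
    flatMeasure d c V (closedBall y ρ) = ENNReal.ofReal c *
      μH[(d : ℝ)] ((V : Set (EuclideanSpace ℝ (Fin n))) ∩ closedBall y ρ) := by
  rw [flatMeasure, Measure.smul_apply, Measure.restrict_apply measurableSet_closedBall,
    Set.inter_comm, smul_eq_mul]

lemma flatDensity_nonneg (hc : 0 ≤ c) : 0 ≤ flatDensity d c V :=
  mul_nonneg hc measureReal_nonneg

lemma flatMeasure_closedBall_of_mem (hV : Module.finrank ℝ V.direction = d) (hc : 0 ≤ c)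
    (hy : y ∈ V) (hρ : 0 ≤ ρ) :
    flatMeasure d c V (closedBall y ρ) = ENNReal.ofReal (flatDensity d c V * ρ ^ d) := by
  rw [flatMeasure_closedBall, hausdorffMeasure_affineSubspace_inter_closedBall hV hy hρ,
    ENNReal.ofReal_mul (flatDensity_nonneg hc), flatDensity, ENNReal.ofReal_mul hc,
    ofReal_measureReal (hausdorffMeasure_ball_lt_top hV).ne, mul_assoc,
    mul_comm (ENNReal.ofReal (ρ ^ d))]

lemma flatMeasure_closedBall_le (hV : Module.finrank ℝ V.direction = d) (hc : 0 ≤ c)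
    (hρ : 0 ≤ ρ) :
    flatMeasure d c V (closedBall y ρ) ≤ ENNReal.ofReal (flatDensity d c V * (2 * ρ) ^ d) := by
  obtain h | ⟨p, hpV, hpy⟩ :=
    ((V : Set (EuclideanSpace ℝ (Fin n))) ∩ closedBall y ρ).eq_empty_or_nonempty
  · rw [flatMeasure_closedBall, h, measure_empty, mul_zero]
    exact zero_le
  · rw [← flatMeasure_closedBall_of_mem hV hc hpV (by positivity)]
    exact measure_mono (closedBall_subset_closedBall' (by linarith [mem_closedBall'.1 hpy]))

lemma flatMeasure_closedBall_ne_top (hV : Module.finrank ℝ V.direction = d) (hc : 0 ≤ c)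
    (hρ : 0 ≤ ρ) : flatMeasure d c V (closedBall y ρ) ≠ ⊤ :=
  ((flatMeasure_closedBall_le hV hc hρ).trans_lt ENNReal.ofReal_lt_top).ne

lemma flatMeasure_real_closedBall_of_mem (hV : Module.finrank ℝ V.direction = d) (hc : 0 ≤ c)
    (hy : y ∈ V) (hρ : 0 ≤ ρ) :
    (flatMeasure d c V).real (closedBall y ρ) = flatDensity d c V * ρ ^ d := by
  rw [measureReal_def, flatMeasure_closedBall_of_mem hV hc hy hρ,
    ENNReal.toReal_ofReal (mul_nonneg (flatDensity_nonneg hc) (pow_nonneg hρ d))]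

lemma flatMeasure_real_closedBall_le (hV : Module.finrank ℝ V.direction = d) (hc : 0 ≤ c)
    (hρ : 0 ≤ ρ) :
    (flatMeasure d c V).real (closedBall y ρ) ≤ flatDensity d c V * (2 * ρ) ^ d :=
  ENNReal.toReal_le_of_le_ofReal (mul_nonneg (flatDensity_nonneg hc) (by positivity))
    (flatMeasure_closedBall_le hV hc hρ)

end FlatMeasure

namespace AhlforsRegular

variable {n : ℕ} {s C₁ r : ℝ} {E : Set (EuclideanSpace ℝ (Fin n))} {x : EuclideanSpace ℝ (Fin n)}

lemma measure_closedBall_ne_top (hE : AhlforsRegular s C₁ E) (hx : x ∈ E) (hr : 0 < r)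
    (hdiam : ENNReal.ofReal r < ediam E) : (μH[s]).restrict E (closedBall x r) ≠ ⊤ := by
  rw [Measure.restrict_apply measurableSet_closedBall, Set.inter_comm]
  exact ((hE x hx r hr hdiam).2.trans_lt ENNReal.ofReal_lt_top).ne

lemma le_measureReal_closedBall (hE : AhlforsRegular s C₁ E) (hx : x ∈ E) (hr : 0 < r)
    (hdiam : ENNReal.ofReal r < ediam E) :
    C₁⁻¹ * r ^ s ≤ ((μH[s]).restrict E).real (closedBall x r) := by
  refine (ENNReal.ofReal_le_iff_le_toReal (hE.measure_closedBall_ne_top hx hr hdiam)).1 ?_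
  rw [Measure.restrict_apply measurableSet_closedBall, Set.inter_comm]
  exact (hE x hx r hr hdiam).1

end AhlforsRegular

section Closeness

variable {n d : ℕ} [NeZero n] {C₁ c r ρ : ℝ} {S : Set (EuclideanSpace ℝ (Fin n))}
  {V : AffineSubspace ℝ (EuclideanSpace ℝ (Fin n))} {x y : EuclideanSpace ℝ (Fin n)}

lemma infDist_plane_le_of_FDist_lt (hreg : AhlforsRegular d C₁ S) (hx : x ∈ S)
    (hdiam : ENNReal.ofReal (4 * r) < ediam S) (hV : Module.finrank ℝ V.direction = d)
    (hc : 0 ≤ c) (hρ : 0 < ρ) (hρr : ρ ≤ r) (hy : y ∈ S ∩ closedBall x r)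
    (hF : FDist ((μH[(d : ℝ)]).restrict S) (flatMeasure d c V) (closedBall x (4 * r)) <
      C₁⁻¹ * (ρ / 2) ^ (d + 1)) :
    infDist y V ≤ ρ := by
  have hr : 0 < r := hρ.trans_le hρr
  have hμ := hreg.measure_closedBall_ne_top hx (by positivity) hdiam
  have hν := flatMeasure_closedBall_ne_top (y := x) hV hc (by positivity : 0 ≤ 4 * r)
  have hdiam' : ENNReal.ofReal (ρ / 2) < ediam S :=
    (ENNReal.ofReal_le_ofReal (by linarith)).trans_lt hdiam
  rw [flatMeasure_eq_restrict] at hF hν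
  refine infDist_le_of_FDist_restrict_lt (by positivity) hρ hμ hν
    (closedBall_subset_closedBall' (by linarith [mem_closedBall.1 hy.2])) (hF.trans_le ?_)
  calc C₁⁻¹ * (ρ / 2) ^ (d + 1) = ρ / 2 * (C₁⁻¹ * (ρ / 2) ^ (d : ℝ)) := by
        rw [Real.rpow_natCast]
        ring
    _ ≤ _ := by
        gcongr
        exact hreg.le_measureReal_closedBall hy.1 (by positivity) hdiam'

lemma inv_le_mul_flatDensity_of_FDist_le (hreg : AhlforsRegular d C₁ S) (hx : x ∈ S) (hr : 0 < r)
    (hdiam : ENNReal.ofReal (4 * r) < ediam S) (hV : Module.finrank ℝ V.direction = d)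
    (hc : 0 ≤ c)
    (hF : FDist ((μH[(d : ℝ)]).restrict S) (flatMeasure d c V) (closedBall x (4 * r)) ≤
      C₁⁻¹ * r ^ (d + 1) / 2) :
    C₁⁻¹ ≤ flatDensity d c V * 4 ^ (d + 1) := by
  have hlower := hreg.le_measureReal_closedBall hx hr
    ((ENNReal.ofReal_le_ofReal (by linarith)).trans_lt hdiam)
  rw [Real.rpow_natCast] at hlower
  have hupper := flatMeasure_real_closedBall_le (y := x) hV hc (by positivity : 0 ≤ 2 * r)
  have htest := half_mul_measureReal_closedBall_le_add_FDist (by positivity)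
    (by positivity : 0 < 2 * r) (hreg.measure_closedBall_ne_top hx (by positivity) hdiam)
    (flatMeasure_closedBall_ne_top hV hc (by positivity))
    (closedBall_subset_closedBall (by linarith))
  rw [mul_div_cancel_left₀ r two_ne_zero] at htest
  have hsum : C₁⁻¹ * r ^ (d + 1) ≤
      flatDensity d c V * 4 ^ (d + 1) * r ^ (d + 1) / 2 + C₁⁻¹ * r ^ (d + 1) / 2 :=
    calc C₁⁻¹ * r ^ (d + 1) = r * (C₁⁻¹ * r ^ d) := by ring
      _ ≤ r * _ := by gcongr
      _ ≤ _ := htest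
      _ ≤ 2 * r * (flatDensity d c V * (2 * (2 * r)) ^ d) + C₁⁻¹ * r ^ (d + 1) / 2 := by gcongr
      _ = _ := by
        rw [← mul_assoc 2 2 r, mul_pow]
        ring
  exact le_of_mul_le_mul_right (by linarith) (pow_pos hr (d + 1))

lemma infDist_le_of_mem_plane_of_FDist_lt (hC₁ : 0 < C₁) (hreg : AhlforsRegular d C₁ S)
    (hx : x ∈ S) (hdiam : ENNReal.ofReal (4 * r) < ediam S)
    (hV : Module.finrank ℝ V.direction = d) (hc : 0 ≤ c) (hρ : 0 < ρ) (hρr : ρ ≤ r)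
    (hy : y ∈ (V : Set (EuclideanSpace ℝ (Fin n))) ∩ closedBall x r)
    (hF : FDist ((μH[(d : ℝ)]).restrict S) (flatMeasure d c V) (closedBall x (4 * r)) <
      C₁⁻¹ * (ρ / 8) ^ (d + 1)) :
    infDist y S ≤ ρ := by
  have hr : 0 < r := hρ.trans_le hρr
  have hdensity : C₁⁻¹ ≤ flatDensity d c V * 4 ^ (d + 1) := by
    refine inv_le_mul_flatDensity_of_FDist_le hreg hx hr hdiam hV hc (hF.le.trans ?_)
    calc C₁⁻¹ * (ρ / 8) ^ (d + 1) ≤ C₁⁻¹ * (r / 2) ^ (d + 1) := by gcongr; norm_num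
      _ = C₁⁻¹ * r ^ (d + 1) / 2 * (1 / 2) ^ d := by ring
      _ ≤ C₁⁻¹ * r ^ (d + 1) / 2 :=
        mul_le_of_le_one_right (by positivity) (pow_le_one₀ (by norm_num) (by norm_num))
  rw [FDist_comm] at hF
  refine infDist_le_of_FDist_restrict_lt (by positivity) hρ
    (flatMeasure_closedBall_ne_top hV hc (by positivity))
    (hreg.measure_closedBall_ne_top hx (by positivity) hdiam)
    (closedBall_subset_closedBall' (by linarith [mem_closedBall.1 hy.2])) (hF.trans_le ?_)
  calc C₁⁻¹ * (ρ / 8) ^ (d + 1)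
      ≤ flatDensity d c V * 4 ^ (d + 1) * (ρ / 8) ^ (d + 1) := by gcongr
    _ = ρ / 2 * (flatDensity d c V * (ρ / 2) ^ d) := by
        rw [mul_assoc, ← mul_pow]
        ring
    _ = ρ / 2 * (flatMeasure d c V).real (closedBall y (ρ / 2)) := by
        rw [flatMeasure_real_closedBall_of_mem hV hc hy.1 (by positivity)]

end Closeness

lemma bbeta_le_add {d : ℕ} {E : Set (EuclideanSpace ℝ (Fin (d + 1)))}
    {x : EuclideanSpace ℝ (Fin (d + 1))} {r a b : ℝ}
    {V : AffineSubspace ℝ (EuclideanSpace ℝ (Fin (d + 1)))} (hr : 0 < r) (ha : 0 ≤ a) (hb : 0 ≤ b)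
    (hVne : (V : Set (EuclideanSpace ℝ (Fin (d + 1)))).Nonempty)
    (hV : Module.finrank ℝ V.direction = d)
    (hEV : ∀ y ∈ E ∩ closedBall x r, infDist y V ≤ a * r)
    (hVE : ∀ y ∈ (V : Set (EuclideanSpace ℝ (Fin (d + 1)))) ∩ closedBall x r,
      infDist y E ≤ b * r) :
    bbeta d E x r ≤ a + b := by
  refine csInf_le_of_le ⟨0, ?_⟩ ⟨V, hVne, hV, rfl⟩ (add_le_add ?_ ?_)
  · rintro _ ⟨W, -, -, rfl⟩
    refine add_nonneg (div_nonneg (Real.sSup_nonneg ?_) hr.le)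
      (div_nonneg (Real.sSup_nonneg ?_) hr.le)
    all_goals exact Set.forall_mem_image.2 fun _ _ ↦ infDist_nonneg
  · exact (div_le_iff₀ hr).2 (Real.sSup_le (Set.forall_mem_image.2 hEV) (by positivity))
  · exact (div_le_iff₀ hr).2 (Real.sSup_le (Set.forall_mem_image.2 hVE) (by positivity))

lemma exists_affineSubspace_finrank_direction_eq {K E : Type*} [DivisionRing K] [AddCommGroup E]
    [Module K E] {d : ℕ} (hd : d ≤ Module.finrank K E) :
    ∃ V : AffineSubspace K E, (V : Set E).Nonempty ∧ Module.finrank K V.direction = d := by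
  obtain ⟨f, hf⟩ := exists_linearIndependent_of_le_finrank hd
  refine ⟨(Submodule.span K (Set.range f)).toAffineSubspace, ⟨0, Submodule.zero_mem _⟩, ?_⟩
  rw [Submodule.toAffineSubspace_direction, finrank_span_eq_card hf, Fintype.card_fin]

lemma le_alphaA {n d : ℕ} (hd : d ≤ n) {μ : Measure (EuclideanSpace ℝ (Fin n))}
    {x : EuclideanSpace ℝ (Fin n)} {r m : ℝ} (hr : 0 < r)
    (h : ∀ V : AffineSubspace ℝ (EuclideanSpace ℝ (Fin n)),
      (V : Set (EuclideanSpace ℝ (Fin n))).Nonempty → Module.finrank ℝ V.direction = d →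
      ∀ c : ℝ, 0 < c → m * r ^ (d + 1) ≤ FDist μ (flatMeasure d c V) (closedBall x r)) :
    m ≤ alphaA d μ x r := by
  obtain ⟨V₀, hV₀ne, hV₀⟩ := exists_affineSubspace_finrank_direction_eq
    (K := ℝ) (E := EuclideanSpace ℝ (Fin n)) (hd.trans_eq finrank_euclideanSpace_fin.symm)
  refine le_csInf ⟨_, V₀, hV₀ne, hV₀, rfl⟩ ?_
  rintro _ ⟨V, hVne, hV, rfl⟩
  have hpow : r ^ (-(d : ℝ) - 1) = (r ^ (d + 1))⁻¹ := by
    rw [← Real.rpow_natCast, ← Real.rpow_neg hr.le, Nat.cast_succ, neg_add']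
  rw [alphaV, hpow, ← div_eq_inv_mul, le_div_iff₀ (by positivity)]
  refine le_csInf ⟨_, 1, one_pos, rfl⟩ ?_
  rintro _ ⟨c, hc, rfl⟩
  exact h V hVne hV c hc

theorem le_alphaA_of_two_mul_lt_bbeta {d : ℕ} {C₁ δ r : ℝ}
    {S : Set (EuclideanSpace ℝ (Fin (d + 1)))} {x : EuclideanSpace ℝ (Fin (d + 1))} (hC₁ : 0 < C₁)
    (hreg : AhlforsRegular d C₁ S) (hx : x ∈ S) (hr : 0 < r)
    (hdiam : ENNReal.ofReal (4 * r) < ediam S) (hδ : 0 < δ) (hδ₁ : δ ≤ 1)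
    (hβ : 2 * δ < bbeta d S x r) :
    C₁⁻¹ * (δ / 32) ^ (d + 1) ≤ alphaA d ((μH[(d : ℝ)]).restrict S) x (4 * r) := by
  refine le_alphaA d.le_succ (by positivity) fun V hVne hV c hc ↦ ?_
  rw [mul_assoc, ← mul_pow, show δ / 32 * (4 * r) = δ * r / 8 by ring]
  by_contra! hF
  have hδr : 0 < δ * r := by positivity
  have hδr₁ : δ * r ≤ r := mul_le_of_le_one_left hr.le hδ₁
  have hF' := hF.trans_le (by gcongr; norm_num : _ ≤ C₁⁻¹ * (δ * r / 2) ^ (d + 1))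
  refine hβ.not_ge ((bbeta_le_add hr hδ.le hδ.le hVne hV ?_ ?_).trans_eq (two_mul δ).symm)
  · exact fun y hy ↦ infDist_plane_le_of_FDist_lt hreg hx hdiam hV hc.le hδr hδr₁ hy hF'
  · exact fun y hy ↦ infDist_le_of_mem_plane_of_FDist_lt hC₁ hreg hx hdiam hV hc.le hδr hδr₁ hy hF

theorem stmt1_general (d : ℕ) (C₁ β : ℝ) (hC₁ : 0 < C₁) (hβ : 0 < β) :
    ∃ ε : ℝ, 0 < ε ∧
      ∀ S : Set (EuclideanSpace ℝ (Fin (d + 1))), AhlforsRegular (d : ℝ) C₁ S →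
        ∀ x ∈ S, ∀ r : ℝ, 0 < r → ENNReal.ofReal (4 * r) < ediam S →
          β ≤ bbeta d S x r →
          ε ≤ alphaA d ((μH[(d : ℝ)]).restrict S) x (4 * r) := by
  have hδ : 0 < min 1 (β / 4) := by positivity
  refine ⟨C₁⁻¹ * (min 1 (β / 4) / 32) ^ (d + 1), by positivity, fun S hreg x hx r hr hdiam hb ↦ ?_⟩
  have hδβ : 2 * min 1 (β / 4) < β := by linarith [min_le_right 1 (β / 4)]
  exact le_alphaA_of_two_mul_lt_bbeta hC₁ hreg hx hr hdiam hδ (min_le_left _ _) (hδβ.trans_le hb)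

/-- if `Σ ⊆ ℝ^{d+1}` is Ahlfors `d`-regular with constant `C₁` and
`bβ_Σ(x,r) ≥ β` for some `x ∈ Σ`, `0 < r < diam Σ / 100`, then
`α_{H^d|_Σ}(x,4r) ≥ ε` for some `ε = ε(d,C₁,β) > 0`. -/
theorem stmt1 (d : ℕ) (C₁ β : ℝ) (hC₁ : 1 ≤ C₁) (hβ : 0 < β) :
    ∃ ε : ℝ, 0 < ε ∧
      ∀ (S : Set (EuclideanSpace ℝ (Fin (d+1)))), IsClosed S →
        AhlforsRegular (d : ℝ) C₁ S →
        ∀ x ∈ S, ∀ r : ℝ, 0 < r → ENNReal.ofReal (100 * r) < EMetric.diam S →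
          β ≤ bbeta d S x r →
          ε ≤ alphaA d ((μH[(d : ℝ)]).restrict S) x (4 * r) := by
  obtain ⟨ε, hε, h⟩ := stmt1_general d C₁ β (one_pos.trans_le hC₁) hβ
  exact ⟨ε, hε, fun S _ hreg x hx r hr hdiam ↦ h S hreg x hx r hr
    ((ENNReal.ofReal_le_ofReal (by linarith)).trans_lt hdiam)⟩
end

section
/- Let ω and σ be finite measures on a measurable space X, let R be a measurable set with ω(R) > 0 and σ(R) > 0, and let (Q_i)_{i∈I} be a countable measurable partition of R. Suppose there exist t ∈ (0,1] and i₀ ∈ I such that ω(Q_{i₀}) ≥ t·ω(R) and ω(Q_{i₀})·σ(R) ≥ 16·ω(R)·σ(Q_{i₀}). Then ∑_{i∈I} ω(Q_i)^{1/2} σ(Q_i)^{1/2} ≤ (1 − t/4)·ω(R)^{1/2} σ(R)^{1/2}. -/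
open MeasureTheory Filter
open scoped ENNReal

/-!
Write `a = ω(Q_{i₀}) / ω(R) ≥ t` and let `c ^ 2` be the factor by which the `ω`-density of the
distinguished cell exceeds that of `R`. This cell then contributes at most `a / c` times
`√ω(R) √σ(R)`. By the Cauchy–Schwarz inequality the other cells contribute at most
`√(ω(R) - ω(Q_{i₀})) √σ(R)`, which is at most `1 - a / 2` times `√ω(R) √σ(R)` because
`√(1 - a) ≤ 1 - a / 2`. The sum of the two factors is `1 - (1 / 2 - 1 / c) a`, and `c = 4` gives
`1 - a / 4 ≤ 1 - t / 4`.
-/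

section Real

variable {W S w v c t : ℝ}

theorem sqrt_sub_le_mul_sqrt (hW : 0 < W) (hw : w ≤ W) : √(W - w) ≤ (1 - w / W / 2) * √W := by
  have hdiv : -1 ≤ -(w / W) := neg_le_neg ((div_le_one hW).2 hw)
  calc √(W - w) = √((1 + -(w / W)) * W) := by congr 1; field_simp; ring
    _ = √(1 + -(w / W)) * √W := Real.sqrt_mul (by linarith) W
    _ ≤ (1 + -(w / W) / 2) * √W := by gcongr; exact Real.sqrt_one_add_le hdiv
    _ = (1 - w / W / 2) * √W := by ring

theorem sqrt_mul_sqrt_le_of_density_jump (hc : 0 < c) (hW : 0 < W) (hw : 0 ≤ w)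
    (hjump : c ^ 2 * W * v ≤ w * S) : √w * √v ≤ w / W / c * (√W * √S) := by
  have hsqrt : c * √W * √v ≤ √w * √S := by
    calc c * √W * √v = √(c ^ 2 * W * v) := by
          rw [Real.sqrt_mul (by positivity), Real.sqrt_mul (by positivity), Real.sqrt_sq hc.le]
      _ ≤ √(w * S) := Real.sqrt_le_sqrt hjump
      _ = √w * √S := Real.sqrt_mul hw S
  calc √w * √v = √w * (c * √W * √v) / (c * √W) := by field_simp
    _ ≤ √w * (√w * √S) / (c * √W) := by gcongr
    _ = √w ^ 2 / √W ^ 2 / c * (√W * √S) := by field_simp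
    _ = w / W / c * (√W * √S) := by rw [Real.sq_sqrt hw, Real.sq_sqrt hW.le]

theorem sqrt_mul_sqrt_add_le_of_density_jump (hc : 2 ≤ c) (hW : 0 < W) (hw : 0 ≤ w) (hwW : w ≤ W)
    (hv : 0 ≤ v) (hbig : t * W ≤ w) (hjump : c ^ 2 * W * v ≤ w * S) :
    √w * √v + √(W - w) * √(S - v) ≤ (1 - (1 / 2 - 1 / c) * t) * √W * √S := by
  have ht : t ≤ w / W := (le_div_iff₀ hW).2 hbig
  have hc' : 1 / c ≤ 1 / 2 := one_div_le_one_div_of_le two_pos hc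
  have hcell : √w * √v ≤ w / W / c * (√W * √S) :=
    sqrt_mul_sqrt_le_of_density_jump (two_pos.trans_le hc) hW hw hjump
  have hrestW : √(W - w) ≤ (1 - w / W / 2) * √W := sqrt_sub_le_mul_sqrt hW hwW
  have hrestS : √(S - v) ≤ √S := Real.sqrt_le_sqrt (sub_le_self S hv)
  have hrest : √(W - w) * √(S - v) ≤ (1 - w / W / 2) * √W * √S :=
    mul_le_mul hrestW hrestS (Real.sqrt_nonneg _) ((Real.sqrt_nonneg _).trans hrestW)
  calc √w * √v + √(W - w) * √(S - v)
      ≤ w / W / c * (√W * √S) + (1 - w / W / 2) * √W * √S := add_le_add hcell hrest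
    _ = (1 - (1 / 2 - 1 / c) * (w / W)) * √W * √S := by ring
    _ ≤ (1 - (1 / 2 - 1 / c) * t) * √W * √S := by gcongr

end Real

section Sum

variable {ι : Type*} {f g : ι → ℝ} {s : Finset ι} {i₀ : ι} {W S c t : ℝ}

theorem sum_sqrt_mul_sqrt_le_add (hf : ∀ i, 0 ≤ f i) (hg : ∀ i, 0 ≤ g i) (hi₀ : i₀ ∈ s)
    (hfW : ∑ i ∈ s, f i ≤ W) (hgS : ∑ i ∈ s, g i ≤ S) :
    ∑ i ∈ s, √(f i) * √(g i) ≤ √(f i₀) * √(g i₀) + √(W - f i₀) * √(S - g i₀) := by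
  classical
  rw [← Finset.add_sum_erase s _ hi₀] at hfW hgS ⊢
  have hcs := Real.sum_sqrt_mul_sqrt_le (s.erase i₀) hf hg
  refine add_le_add_right (hcs.trans ?_) _
  gcongr
  · exact le_sub_iff_add_le'.2 hfW
  · exact le_sub_iff_add_le'.2 hgS

theorem sum_sqrt_mul_sqrt_le_of_density_jump (hf : ∀ i, 0 ≤ f i) (hg : ∀ i, 0 ≤ g i)
    (hi₀ : i₀ ∈ s) (hW : 0 < W) (hfW : ∑ i ∈ s, f i ≤ W) (hgS : ∑ i ∈ s, g i ≤ S) (hc : 2 ≤ c)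
    (hbig : t * W ≤ f i₀) (hjump : c ^ 2 * W * g i₀ ≤ f i₀ * S) :
    ∑ i ∈ s, √(f i) * √(g i) ≤ (1 - (1 / 2 - 1 / c) * t) * √W * √S := by
  have hfi₀ : f i₀ ≤ W := (Finset.single_le_sum (fun i _ ↦ hf i) hi₀).trans hfW
  exact (sum_sqrt_mul_sqrt_le_add hf hg hi₀ hfW hgS).trans
    (sqrt_mul_sqrt_add_le_of_density_jump hc hW (hf i₀) hfi₀ (hg i₀) hbig hjump)

end Sum

section Measure

variable {X ι : Type*} [MeasurableSpace X] {R : Set X} {Q : ι → Set X}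

theorem sum_measureReal_le_of_subset {μ : Measure X} {s : Finset ι} (hμR : μ R ≠ ∞)
    (hQm : ∀ i ∈ s, MeasurableSet (Q i)) (hdisj : (s : Set ι).PairwiseDisjoint Q)
    (hQR : ∀ i ∈ s, Q i ⊆ R) : ∑ i ∈ s, μ.real (Q i) ≤ μ.real R := by
  rw [← measureReal_biUnion_finset hdisj hQm fun i hi ↦ measure_ne_top_of_subset (hQR i hi) hμR]
  exact measureReal_mono (Set.iUnion₂_subset hQR) hμR

theorem stmt7_general {ω σ : Measure X} (hω₀ : 0 < ω R) (hω : ω R ≠ ∞) (hσ : σ R ≠ ∞)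
    (hQm : ∀ i, MeasurableSet (Q i)) (hdisj : Pairwise (Function.onFun Disjoint Q))
    (hQR : ∀ i, Q i ⊆ R) {c t : ℝ} (hc : 2 ≤ c) {i₀ : ι} (hbig : t * ω.real R ≤ ω.real (Q i₀))
    (hjump : c ^ 2 * ω.real R * σ.real (Q i₀) ≤ ω.real (Q i₀) * σ.real R) :
    (Summable fun i ↦ √(ω.real (Q i)) * √(σ.real (Q i))) ∧
      ∑' i, √(ω.real (Q i)) * √(σ.real (Q i)) ≤
        (1 - (1 / 2 - 1 / c) * t) * √(ω.real R) * √(σ.real R) := by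
  classical
  have hsum {μ : Measure X} (hμR : μ R ≠ ∞) (s : Finset ι) : ∑ i ∈ s, μ.real (Q i) ≤ μ.real R :=
    sum_measureReal_le_of_subset hμR (fun i _ ↦ hQm i) (hdisj.set_pairwise _) fun i _ ↦ hQR i
  have hbound (s : Finset ι) : ∑ i ∈ s, √(ω.real (Q i)) * √(σ.real (Q i)) ≤
      (1 - (1 / 2 - 1 / c) * t) * √(ω.real R) * √(σ.real R) :=
    calc ∑ i ∈ s, √(ω.real (Q i)) * √(σ.real (Q i))
        ≤ ∑ i ∈ insert i₀ s, √(ω.real (Q i)) * √(σ.real (Q i)) :=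
          Finset.sum_le_sum_of_subset_of_nonneg (Finset.subset_insert i₀ s)
            fun _ _ _ ↦ by positivity
      _ ≤ _ := sum_sqrt_mul_sqrt_le_of_density_jump (fun _ ↦ measureReal_nonneg)
          (fun _ ↦ measureReal_nonneg) (Finset.mem_insert_self i₀ s)
          (ENNReal.toReal_pos hω₀.ne' hω) (hsum hω _) (hsum hσ _) hc hbig hjump
  have hsummable := summable_of_sum_le (fun _ ↦ by positivity) hbound
  exact ⟨hsummable, hsummable.tsum_le_of_sum_le hbound⟩

end Measure

/-- if some cell `Q_{i₀}` of a countable measurable partition of `R`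
carries a definite proportion of `ω(R)` and has `ω`-density increasing by a factor `16`,
then `∑ ω(Q_i)^{1/2} σ(Q_i)^{1/2} ≤ (1 − t/4) ω(R)^{1/2} σ(R)^{1/2}`. -/
theorem stmt7 {X : Type*} [MeasurableSpace X] (ω σ : Measure X)
    [IsFiniteMeasure ω] [IsFiniteMeasure σ]
    {ι : Type*} [Countable ι]
    (R : Set X) (hR : MeasurableSet R) (hωR : 0 < ω R) (hσR : 0 < σ R)
    (Q : ι → Set X) (hQm : ∀ i, MeasurableSet (Q i))
    (hdisj : Pairwise (Function.onFun Disjoint Q))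
    (hunion : (⋃ i, Q i) = R)
    (t : ℝ) (ht0 : 0 < t) (ht1 : t ≤ 1) (i₀ : ι)
    (hbig : t * (ω R).toReal ≤ (ω (Q i₀)).toReal)
    (hjump : 16 * (ω R).toReal * (σ (Q i₀)).toReal ≤
      (ω (Q i₀)).toReal * (σ R).toReal) :
    (∑' i, ((ω (Q i)).toReal) ^ ((1 : ℝ) / 2) * ((σ (Q i)).toReal) ^ ((1 : ℝ) / 2)) ≤
      (1 - t / 4) * ((ω R).toReal) ^ ((1 : ℝ) / 2) * ((σ R).toReal) ^ ((1 : ℝ) / 2) := by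
  simp only [← Real.sqrt_eq_rpow, ← measureReal_def] at hbig hjump ⊢
  rw [show 1 - t / 4 = 1 - (1 / 2 - 1 / 4) * t by ring]
  exact (stmt7_general hωR (measure_ne_top ω R) (measure_ne_top σ R) hQm hdisj
    (fun i ↦ hunion ▸ Set.subset_iUnion Q i) (by norm_num) hbig (by linarith)).2
end
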